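/- Let x and y be two distinct points of the separable Hilbert space ℓ² and let S ⊆ ℓ² be a set with x, y ∈ ℓ² \ S such that S intersects every continuum in ℓ² containing both x and y. Then S (with the subspace topology) is strongly infinite dimensional. -/

import Mathlib

open Set

/-- A separator between `A` and `B` in a topological space: a closed set `L` whose
complement is the union of two disjoint open sets containing `A` and `B` respectively. -/
def IsSeparator {X : Type*} [TopologicalSpace X] (A B L : Set X) : Prop :=
  IsClosed L ∧ ∃ U V : Set X, IsOpen U ∧ IsOpen V ∧ Disjoint U V ∧
    A ⊆ U ∧ B ⊆ V ∧ Lᶜ = U ∪ V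

/-- A family of pairs of sets is essential if every choice of separators has
nonempty intersection. -/
def IsEssentialFamily {X : Type*} [TopologicalSpace X] {Γ : Type*}
    (A B : Γ → Set X) : Prop :=
  ∀ L : Γ → Set X, (∀ i, IsSeparator (A i) (B i) (L i)) → (⋂ i, L i).Nonempty

/-- A space is strongly infinite dimensional if it admits a countably infinite
essential family of pairs of disjoint closed subsets. -/
def StronglyInfiniteDimensional (X : Type*) [TopologicalSpace X] : Prop :=
  ∃ A B : ℕ → Set X,
    (∀ n, IsClosed (A n) ∧ IsClosed (B n) ∧ Disjoint (A n) (B n)) ∧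
    IsEssentialFamily A B

/-- The separable Hilbert space `ℓ²` of square-summable real sequences. -/
abbrev EllTwo : Type := lp (fun _ : ℕ => ℝ) 2


namespace CubeAux

/-- The indicator vector of a finite set of coordinates. -/
def ind {n : ℕ} (S : Finset (Fin n)) : Fin n → ℕ := fun i => if i ∈ S then 1 else 0

/-- Cubical coboundary modulo 2. -/
def bd {n : ℕ} (w : (Fin n → ℕ) → Finset (Fin n) → ZMod 2) (v : Fin n → ℕ)
    (S : Finset (Fin n)) : ZMod 2 :=
  ∑ p ∈ S, (w v (S.erase p) + w (v + Pi.single p 1) (S.erase p))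

/-- Iterated cup product of the coboundaries of the `b k`. -/
def om {n : ℕ} (b : ℕ → (Fin n → ℕ) → ZMod 2) : ℕ → (Fin n → ℕ) → Finset (Fin n) → ZMod 2
  | 0 => fun _ S => if S = ∅ then 1 else 0
  | k + 1 => bd (fun v S => om b k v S * b k (v + ind S))

lemma two_zero (a : ZMod 2) : a + a = 0 := CharTwo.add_self_eq_zero a

lemma ind_erase {n : ℕ} {S : Finset (Fin n)} {p : Fin n} (hp : p ∈ S) :
    Pi.single p 1 + ind (S.erase p) = ind S := by
  funext i
  simp only [ind, Pi.add_apply, Finset.mem_erase]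
  by_cases h : i = p
  · subst h; simp [hp]
  · simp [h]

lemma bd_bd {n : ℕ} (w : (Fin n → ℕ) → Finset (Fin n) → ZMod 2) (v : Fin n → ℕ)
    (S : Finset (Fin n)) : bd (bd w) v S = 0 := by
  classical
  unfold bd
  simp only [← Finset.sum_add_distrib]
  rw [Finset.sum_sigma']
  refine Finset.sum_involution (fun x _ => ⟨x.2, x.1⟩) ?_ ?_ ?_ ?_
  · rintro ⟨p, q⟩ h
    simp only
    rw [Finset.erase_right_comm, add_right_comm v]
    generalize w v _ = a
    generalize w (v + _) _ = a
    generalize w (v + _) _ = a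
    generalize w _ _ = a
    grind
  · rintro ⟨p, q⟩ h _ h'
    simp only [Finset.mem_sigma, Finset.mem_erase] at h
    simp only [Sigma.mk.injEq, heq_eq_eq] at h'
    exact h.2.1 h'.1
  · rintro ⟨p, q⟩ h
    simp only [Finset.mem_sigma, Finset.mem_erase] at h ⊢
    exact ⟨h.2.2, fun e => h.2.1 e.symm, h.1⟩
  · rintro ⟨p, q⟩ h
    rfl

lemma bd_om {n : ℕ} (b : ℕ → (Fin n → ℕ) → ZMod 2) (k : ℕ) (v : Fin n → ℕ)
    (S : Finset (Fin n)) : bd (om b k) v S = 0 := by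
  cases k with
  | zero => exact Finset.sum_eq_zero fun p _ => two_zero _
  | succ k => exact bd_bd _ _ _

lemma om_succ {n : ℕ} (b : ℕ → (Fin n → ℕ) → ZMod 2) (k : ℕ) (v : Fin n → ℕ)
    (S : Finset (Fin n)) : om b (k + 1) v S =
      ∑ p ∈ S, om b k v (S.erase p) * (b k (v + ind (S.erase p)) + b k (v + ind S)) := by
  have h := bd_om b k v S
  have h2 : om b (k + 1) v S = om b (k + 1) v S + bd (om b k) v S * b k (v + ind S) := by
    rw [h]; simp
  rw [h2]
  simp only [om, bd]
  rw [Finset.sum_mul, ← Finset.sum_add_distrib]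
  refine Finset.sum_congr rfl fun p hp => ?_
  rw [add_assoc v, ind_erase hp]
  linear_combination two_zero (om b k (v + Pi.single p 1) (S.erase p) * b k (v + ind S))

lemma om_local {n : ℕ} (b : ℕ → (Fin n → ℕ) → ZMod 2) (k : ℕ) (v : Fin n → ℕ)
    (S : Finset (Fin n)) (h : om b k v S ≠ 0) : ∀ j < k, ∃ w w' : Fin n → ℕ,
      v ≤ w ∧ w ≤ v + ind S ∧ v ≤ w' ∧ w' ≤ v + ind S ∧ b j w ≠ b j w' := by
  induction k generalizing S with
  | zero => intro j hj; omega
  | succ k ih =>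
    rw [om_succ] at h
    obtain ⟨p, hp, hne⟩ := Finset.exists_ne_zero_of_sum_ne_zero h
    have h1 := left_ne_zero_of_mul hne
    have h2 := right_ne_zero_of_mul hne
    have hle : ind (S.erase p) ≤ ind S := by
      rw [← ind_erase hp]; exact le_add_of_nonneg_left (fun _ => Nat.zero_le _)
    have hle' : v + ind (S.erase p) ≤ v + ind S := by gcongr
    intro j hj
    rcases Nat.lt_succ_iff_lt_or_eq.1 hj with hj | rfl
    · obtain ⟨w, w', a1, a2, a3, a4, a5⟩ := ih _ h1 j hj
      exact ⟨w, w', a1, a2.trans hle', a3, a4.trans hle', a5⟩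
    · have nn : ∀ T : Finset (Fin n), v ≤ v + ind T := fun T =>
        le_add_of_nonneg_right (fun _ => Nat.zero_le _)
      refine ⟨_, _, nn _, hle', nn _, le_rfl, fun e => h2 ?_⟩
      rw [e]; exact two_zero _

lemma sum_update {n : ℕ} (t : Fin n → Finset ℕ) (p : Fin n) (s : Finset ℕ)
    (g : (Fin n → ℕ) → ZMod 2) :
    ∑ v ∈ Fintype.piFinset (Function.update t p s), g v =
      ∑ x ∈ s, ∑ v ∈ Fintype.piFinset (Function.update t p {0}), g (Function.update v p x) := by
  rw [← Finset.sum_product']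
  refine Finset.sum_bij' (fun v _ => (v p, Function.update v p 0))
    (fun y _ => Function.update y.2 p y.1) ?_ ?_ ?_ ?_ ?_
  · intro v hv
    rw [Fintype.mem_piFinset] at hv
    simp only [Finset.mem_product, Fintype.mem_piFinset]
    refine ⟨by simpa using hv p, fun i => ?_⟩
    by_cases h : i = p
    · subst h; simp
    · simpa [h] using hv i
  · rintro ⟨x, v⟩ hv
    simp only [Finset.mem_product, Fintype.mem_piFinset] at hv ⊢
    intro i
    by_cases h : i = p
    · subst h; simpa using hv.1
    · simpa [h] using hv.2 i
  · intro v hv; simp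
  · rintro ⟨x, v⟩ hv
    simp only [Finset.mem_product, Fintype.mem_piFinset] at hv
    have := hv.2 p
    simp only [Function.update_self, Finset.mem_singleton] at this
    simp [← this]
  · intro v hv; simp

lemma sum_tele {n : ℕ} (t : Fin n → Finset ℕ) (p : Fin n) (N : ℕ) (ht : t p = Finset.range N)
    (g : (Fin n → ℕ) → ZMod 2) :
    ∑ v ∈ Fintype.piFinset t, (g v + g (v + Pi.single p 1)) =
      ∑ v ∈ Fintype.piFinset (Function.update t p {0}), g v +
      ∑ v ∈ Fintype.piFinset (Function.update t p {N}), g v := by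
  have h1 : t = Function.update t p (Finset.range N) := by rw [← ht]; simp
  conv_lhs => rw [h1]
  rw [sum_update, sum_update t p {0}, sum_update t p {N}]
  simp only [Finset.sum_singleton, Finset.sum_add_distrib]
  have h2 : ∀ (v : Fin n → ℕ) (x : ℕ), Function.update v p x + Pi.single p 1
      = Function.update v p (x + 1) := by
    intro v x; funext i
    by_cases h : i = p
    · subst h; simp
    · simp [h]
  simp only [h2]
  generalize hG : (fun x => ∑ v ∈ Fintype.piFinset (Function.update t p {0}),
    g (Function.update v p x)) = G
  have hG' : ∀ x, ∑ v ∈ Fintype.piFinset (Function.update t p {0}),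
    g (Function.update v p x) = G x := fun x => by rw [← hG]
  simp only [hG']
  have := Finset.sum_range_sub G N
  simp only [CharTwo.sub_eq_add, Finset.sum_add_distrib] at this
  rw [add_comm, this, add_comm]

/-- Coordinate ranges of the `k`-dimensional face used in the induction. -/
def tt (n N k : ℕ) : Fin n → Finset ℕ := fun p => if p.val < k then Finset.range N else {N}

/-- The first `k` coordinates. -/
def SS (n k : ℕ) : Finset (Fin n) := Finset.univ.filter fun p => p.val < k

lemma count {n : ℕ} (N : ℕ) (b : ℕ → (Fin n → ℕ) → ZMod 2)
    (h0 : ∀ (j : Fin n) v, v j = 0 → b j v = 0) (h1 : ∀ (j : Fin n) v, v j = N → b j v = 1)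
    (k : ℕ) (hk : k ≤ n) :
    ∑ v ∈ Fintype.piFinset (tt n N k), om b k v (SS n k) = 1 := by
  induction k with
  | zero =>
    have : tt n N 0 = fun _ => {N} := by funext p; simp [tt]
    rw [this, Fintype.piFinset_singleton]
    simp [om, SS]
  | succ k ih =>
    have ih := ih (by omega)
    let g : (Fin n → ℕ) → Finset (Fin n) → ZMod 2 := fun v S => om b k v S * b k (v + ind S)
    change ∑ v ∈ Fintype.piFinset (tt n N (k+1)), bd g v (SS n (k+1)) = 1
    unfold bd
    rw [Finset.sum_comm]
    have step : ∀ p ∈ SS n (k+1), ∑ v ∈ Fintype.piFinset (tt n N (k+1)),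
        (g v ((SS n (k+1)).erase p) + g (v + Pi.single p 1) ((SS n (k+1)).erase p)) =
        ∑ v ∈ Fintype.piFinset (Function.update (tt n N (k+1)) p {0}), g v ((SS n (k+1)).erase p) +
        ∑ v ∈ Fintype.piFinset (Function.update (tt n N (k+1)) p {N}),
          g v ((SS n (k+1)).erase p) := by
      intro p hp
      refine sum_tele _ p N ?_ (fun v => g v ((SS n (k+1)).erase p))
      simp only [SS, Finset.mem_filter] at hp
      simp [tt, hp.2]
    rw [Finset.sum_congr rfl step]
    have loc : ∀ (p : Fin n) (v : Fin n → ℕ), p.val < k → (v p = 0 ∨ v p = N) →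
        g v ((SS n (k+1)).erase p) = 0 := by
      intro p v hp hv
      by_contra hne
      obtain ⟨w, w', a1, a2, a3, a4, a5⟩ := om_local b k v _ (left_ne_zero_of_mul hne) p hp
      have e : ∀ u : Fin n → ℕ, v ≤ u → u ≤ v + ind ((SS n (k+1)).erase p) → u p = v p := by
        intro u hu hu'
        have q1 := hu p
        have q2 := hu' p
        simp [ind] at q2
        exact le_antisymm q2 q1
      have e1 := e w a1 a2
      have e2 := e w' a3 a4
      rcases hv with hv | hv
      · exact a5 (by rw [h0 p w (e1.trans hv), h0 p w' (e2.trans hv)])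
      · exact a5 (by rw [h1 p w (e1.trans hv), h1 p w' (e2.trans hv)])
    have mem_up : ∀ (p : Fin n) (x : ℕ) (v : Fin n → ℕ),
        v ∈ Fintype.piFinset (Function.update (tt n N (k+1)) p {x}) → v p = x := by
      intro p x v hv
      have := Fintype.mem_piFinset.1 hv p
      simpa using this
    have hkn : k < n := hk
    rw [Finset.sum_eq_single (⟨k, hkn⟩ : Fin n)]
    · have z1 : ∑ v ∈ Fintype.piFinset (Function.update (tt n N (k+1)) ⟨k, hkn⟩ {0}),
          g v ((SS n (k+1)).erase ⟨k, hkn⟩) = 0 := by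
        refine Finset.sum_eq_zero fun v hv => ?_
        have := mem_up _ _ _ hv
        have hb := h0 ⟨k, hkn⟩ (v + ind ((SS n (k+1)).erase ⟨k, hkn⟩)) (by simp [ind, this])
        simp only [g]
        simp only at hb
        rw [hb, mul_zero]
      rw [z1, zero_add, ← ih]
      have ht : Function.update (tt n N (k+1)) ⟨k, hkn⟩ {N} = tt n N k := by
        funext p
        by_cases h : p = ⟨k, hkn⟩
        · subst h; simp [tt]
        · have : p.val ≠ k := fun e => h (Fin.ext e)
          simp only [Function.update_of_ne h, tt]
          congr 1
          simp only [eq_iff_iff]; omega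
      have hs : (SS n (k+1)).erase ⟨k, hkn⟩ = SS n k := by
        ext p
        simp only [SS, Finset.mem_erase, Finset.mem_filter, Finset.mem_univ, true_and, ne_eq,
          Fin.ext_iff]
        omega
      rw [hs]
      rw [ht]
      refine Finset.sum_congr rfl fun v hv => ?_
      rw [← ht] at hv
      have := mem_up _ _ _ hv
      have hb := h1 ⟨k, hkn⟩ (v + ind (SS n k)) (by simp [ind, this, SS])
      simp only [g]
      simp only at hb
      rw [hb, mul_one]
    · intro p hp hne
      have hpk : p.val < k := by
        simp only [SS, Finset.mem_filter] at hp
        have : p.val ≠ k := fun e => hne (Fin.ext e)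
        omega
      rw [Finset.sum_eq_zero, Finset.sum_eq_zero, add_zero]
      · exact fun v hv => loc p v hpk (Or.inr (mem_up _ _ _ hv))
      · exact fun v hv => loc p v hpk (Or.inl (mem_up _ _ _ hv))
    · intro h
      simp [SS] at h

/-- Combinatorial core (cubical Sperner/Kuhn lemma). -/
lemma kuhn {n : ℕ} (N : ℕ) (b : ℕ → (Fin n → ℕ) → ZMod 2)
    (h0 : ∀ (j : Fin n) v, v j = 0 → b j v = 0) (h1 : ∀ (j : Fin n) v, v j = N → b j v = 1) :
    ∃ v : Fin n → ℕ, (∀ p, v p < N) ∧ ∀ j < n, ∃ w w' : Fin n → ℕ,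
      v ≤ w ∧ w ≤ v + 1 ∧ v ≤ w' ∧ w' ≤ v + 1 ∧ b j w ≠ b j w' := by
  have h := count N b h0 h1 n le_rfl
  obtain ⟨v, hv, hne⟩ := Finset.exists_ne_zero_of_sum_ne_zero (h.trans_ne one_ne_zero)
  refine ⟨v, fun p => ?_, fun j hj => ?_⟩
  · have := Fintype.mem_piFinset.1 hv p
    simpa [tt] using this
  · obtain ⟨w, w', a1, a2, a3, a4, a5⟩ := om_local b n v _ hne j hj
    have hi : ind (SS n n) = 1 := by funext i; simp [ind, SS]
    rw [hi] at a2 a4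
    exact ⟨w, w', a1, a2, a3, a4, a5⟩

end CubeAux

namespace CubeAux

/-- Finite dimensional cube: faces are essential. -/
lemma finite_cube {n : ℕ} (U V : Fin n → Set (Fin n → unitInterval))
    (hU : ∀ i, IsOpen (U i)) (hV : ∀ i, IsOpen (V i)) (hd : ∀ i, Disjoint (U i) (V i))
    (h0 : ∀ i x, x i = 0 → x ∈ U i) (h1 : ∀ i x, x i = 1 → x ∈ V i) :
    ∃ x, ∀ i, x ∉ U i ∧ x ∉ V i := by
  classical
  by_contra hcon
  push Not at hcon
  obtain ⟨δ, hδ, hball⟩ := lebesgue_number_lemma_of_metric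
    (s := (univ : Set (Fin n → unitInterval)))
    (c := fun q : Fin n × Bool => if q.2 then U q.1 else V q.1) isCompact_univ
    (by rintro ⟨i, b⟩; cases b <;> simp [hU, hV])
    (by
      intro x _
      obtain ⟨i, hi⟩ := hcon x
      rw [mem_iUnion]
      by_cases h : x ∈ U i
      · exact ⟨(i, true), by simpa using h⟩
      · exact ⟨(i, false), by simpa using hi h⟩)
  obtain ⟨m, hm⟩ := exists_nat_one_div_lt hδ
  set N : ℕ := m + 1 with hN
  have hNpos : (0 : ℝ) < N := by rw [hN]; positivity
  have hm' : 1 / (N : ℝ) < δ := by rw [hN]; push_cast; exact hm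
  let pt : (Fin n → ℕ) → (Fin n → unitInterval) := fun v i => projIcc 0 1 zero_le_one ((v i : ℝ) / N)
  let b : ℕ → (Fin n → ℕ) → ZMod 2 := fun k v =>
    if h : k < n then (if pt v ∈ U ⟨k, h⟩ then 0 else 1) else 0
  obtain ⟨v, -, hv⟩ := kuhn (n := n) N b
    (by
      intro j v hj
      have : pt v ∈ U j := h0 j _ (by
        simp only [pt, hj]
        simp)
      simp [b, this])
    (by
      intro j v hj
      have : pt v ∈ V j := h1 j _ (by
        simp only [pt, hj]
        rw [div_self hNpos.ne']
        simp)
      have : pt v ∉ U j := fun h => (hd j).le_bot ⟨h, this⟩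
      simp [b, this])
  obtain ⟨⟨j, c⟩, hj⟩ := hball (pt v) (mem_univ _)
  have near : ∀ w : Fin n → ℕ, v ≤ w → w ≤ v + 1 → pt w ∈ Metric.ball (pt v) δ := by
    intro w hw hw'
    rw [Metric.mem_ball, dist_pi_lt_iff hδ]
    intro i
    refine lt_of_le_of_lt ?_ hm'
    have h1 : (v i : ℝ) ≤ w i := by exact_mod_cast hw i
    have h2 : (w i : ℝ) ≤ v i + 1 := by exact_mod_cast hw' i
    have h3 : dist (pt w i) (pt v i) ≤ dist ((w i : ℝ) / N) ((v i : ℝ) / N) := by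
      have := (LipschitzWith.projIcc (zero_le_one (α := ℝ))).dist_le_mul ((w i : ℝ) / N) ((v i : ℝ) / N)
      simpa using this
    refine h3.trans ?_
    rw [Real.dist_eq, ← sub_div, abs_div, abs_of_pos hNpos]
    gcongr
    rw [abs_le]; constructor <;> linarith
  obtain ⟨w, w', a1, a2, a3, a4, a5⟩ := hv j j.2
  have m1 := hj (near w a1 a2)
  have m2 := hj (near w' a3 a4)
  cases c with
  | true =>
    simp only [if_true] at m1 m2
    exact a5 (by simp [b, m1, m2])
  | false =>
    simp only [Bool.false_eq_true, if_false] at m1 m2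
    have n1 : pt w ∉ U j := fun h => (hd j).le_bot ⟨h, m1⟩
    have n2 : pt w' ∉ U j := fun h => (hd j).le_bot ⟨h, m2⟩
    exact a5 (by simp [b, n1, n2])

/-- Hilbert cube: faces are essential. -/
lemma hilbert_cube (U V : ℕ → Set (ℕ → unitInterval))
    (hU : ∀ i, IsOpen (U i)) (hV : ∀ i, IsOpen (V i)) (hd : ∀ i, Disjoint (U i) (V i))
    (h0 : ∀ i x, x i = 0 → x ∈ U i) (h1 : ∀ i x, x i = 1 → x ∈ V i) :
    ∃ x, ∀ i, x ∉ U i ∧ x ∉ V i := by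
  by_contra hcon
  push Not at hcon
  obtain ⟨t, ht⟩ := isCompact_univ.elim_finite_subcover (fun i => U i ∪ V i)
    (fun i => (hU i).union (hV i)) (by
      intro x _
      obtain ⟨i, hi⟩ := hcon x
      rw [mem_iUnion]
      refine ⟨i, ?_⟩
      by_cases h : x ∈ U i
      · exact Or.inl h
      · exact Or.inr (hi h))
  obtain ⟨n, hn⟩ := t.exists_nat_subset_range
  let e : (Fin n → unitInterval) → (ℕ → unitInterval) := fun x i => if h : i < n then x ⟨i, h⟩ else 0
  have he : Continuous e := by
    refine continuous_pi fun i => ?_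
    by_cases h : i < n
    · simp only [e, h, dif_pos]; exact continuous_apply _
    · simp only [e, h, dif_neg, not_false_eq_true]; exact continuous_const
  obtain ⟨x, hx⟩ := finite_cube (n := n) (fun i => e ⁻¹' U i) (fun i => e ⁻¹' V i)
    (fun i => (hU i).preimage he) (fun i => (hV i).preimage he)
    (fun i => (hd i).preimage e)
    (fun i x hx => h0 i _ (by simp [e, hx])) (fun i x hx => h1 i _ (by simp [e, hx]))
  have := ht (mem_univ (e x))
  simp only [mem_iUnion] at this
  obtain ⟨i, hi, hxi⟩ := this
  have hin : i < n := by simpa using hn hi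
  have := hx ⟨i, hin⟩
  rcases hxi with h | h
  · exact this.1 h
  · exact this.2 h

/-- If no connected component of a compact Hausdorff space meets both closed sets,
they are separated by a clopen set. -/
lemma exists_clopen {K : Type*} [TopologicalSpace K] [CompactSpace K] [T2Space K]
    (A B : Set K) (hA : IsClosed A) (hB : IsClosed B)
    (h : ∀ a ∈ A, Disjoint (connectedComponent a) B) :
    ∃ Z : Set K, IsClopen Z ∧ A ⊆ Z ∧ Disjoint Z B := by
  have key : ∀ a : A, ∃ Z : Set K, IsClopen Z ∧ a.1 ∈ Z ∧ Disjoint Z B := by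
    rintro ⟨a, ha⟩
    have h1 := h a ha
    rw [connectedComponent_eq_iInter_isClopen] at h1
    have hemp : B ∩ ⋂ s : { s : Set K // IsClopen s ∧ a ∈ s }, s.1 = ∅ := by
      rw [inter_comm]; exact disjoint_iff_inter_eq_empty.1 h1
    obtain ⟨u, hu⟩ := hB.isCompact.elim_finite_subfamily_closed
      (fun s : { s : Set K // IsClopen s ∧ a ∈ s } => s.1) (fun s => s.2.1.1) hemp
    refine ⟨⋂ s ∈ u, s.1, isClopen_biInter_finset fun s _ => s.2.1, ?_, ?_⟩
    · simp only [mem_iInter]; exact fun s _ => s.2.2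
    · rw [disjoint_iff_inter_eq_empty, inter_comm]; exact hu
  choose Z hZ haZ hZB using key
  obtain ⟨t, ht⟩ := hA.isCompact.elim_finite_subcover Z (fun a => (hZ a).2)
    (fun a ha => mem_iUnion.2 ⟨⟨a, ha⟩, haZ _⟩)
  refine ⟨⋃ a ∈ t, Z a, isClopen_biUnion_finset fun a _ => hZ a, ht, ?_⟩
  simp only [disjoint_iUnion_left]
  exact fun a _ => hZB a

/-- Separators of all but the zeroth pair of faces of the Hilbert cube contain a continuum
joining the zeroth pair of faces. -/
lemma exists_continuum (U V : ℕ → Set (ℕ → unitInterval))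
    (hU : ∀ i, IsOpen (U i)) (hV : ∀ i, IsOpen (V i)) (hd : ∀ i, Disjoint (U i) (V i))
    (h0 : ∀ i x, x (i + 1) = 0 → x ∈ U i) (h1 : ∀ i x, x (i + 1) = 1 → x ∈ V i) :
    ∃ C : Set (ℕ → unitInterval), IsCompact C ∧ IsConnected C ∧
      (∃ a ∈ C, a 0 = 0) ∧ (∃ a ∈ C, a 0 = 1) ∧ ∀ a ∈ C, ∀ i, a ∉ U i ∧ a ∉ V i := by
  set L : Set (ℕ → unitInterval) := ⋂ i, (U i ∪ V i)ᶜ with hL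
  have hLc : IsClosed L := isClosed_iInter fun i => ((hU i).union (hV i)).isClosed_compl
  have : CompactSpace L := isCompact_iff_compactSpace.1 hLc.isCompact
  have hmem : ∀ a ∈ L, ∀ i, a ∉ U i ∧ a ∉ V i := by
    intro a ha i
    have := mem_iInter.1 ha i
    simpa [not_or] using this
  let A : Set L := {a | a.1 0 = 0}
  let B : Set L := {a | a.1 0 = 1}
  have c0 : Continuous fun a : L => a.1 0 := (continuous_apply 0).comp continuous_subtype_val
  have hA : IsClosed A := isClosed_eq c0 continuous_const
  have hB : IsClosed B := isClosed_eq c0 continuous_const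
  by_cases hcase : ∀ a ∈ A, Disjoint (connectedComponent a) B
  · exfalso
    obtain ⟨Z, hZ, hAZ, hZB⟩ := exists_clopen A B hA hB hcase
    have e := hLc.isClosedEmbedding_subtypeVal
    have k0 : IsClosed {a : ℕ → unitInterval | a 0 = 0} :=
      isClosed_eq (continuous_apply 0) continuous_const
    have k1 : IsClosed {a : ℕ → unitInterval | a 0 = 1} :=
      isClosed_eq (continuous_apply 0) continuous_const
    obtain ⟨W, W', hW, hW', hZW, hZW', hWW⟩ := normal_separation
      (s := Subtype.val '' Z ∪ {a : ℕ → unitInterval | a 0 = 0})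
      (t := Subtype.val '' Zᶜ ∪ {a : ℕ → unitInterval | a 0 = 1})
      ((e.isClosedMap _ hZ.1).union k0) ((e.isClosedMap _ hZ.compl.1).union k1)
      (by
        rw [Set.disjoint_left]
        rintro a (⟨z, hz, rfl⟩ | ha) (⟨z', hz', hh⟩ | ha')
        · rw [Subtype.ext hh] at hz'; exact hz' hz
        · exact hZB.le_bot ⟨hz, ha'⟩
        · subst hh; exact hz' (hAZ ha)
        · simp only [mem_ofPred_eq] at ha ha'
          rw [ha] at ha'; exact zero_ne_one ha')
    obtain ⟨x, hx⟩ := hilbert_cube (fun i => Nat.casesOn i W U) (fun i => Nat.casesOn i W' V)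
      (by rintro (_ | i); exacts [hW, hU i]) (by rintro (_ | i); exacts [hW', hV i])
      (by rintro (_ | i); exacts [hWW, hd i])
      (by rintro (_ | i) x hx; exacts [hZW (Or.inr hx), h0 i x hx])
      (by rintro (_ | i) x hx; exacts [hZW' (Or.inr hx), h1 i x hx])
    have hxL : x ∈ L := mem_iInter.2 fun i => by
      have := hx (i + 1)
      simpa [not_or] using this
    by_cases hz : (⟨x, hxL⟩ : L) ∈ Z
    · exact (hx 0).1 (hZW (Or.inl ⟨_, hz, rfl⟩))
    · exact (hx 0).2 (hZW' (Or.inl ⟨_, hz, rfl⟩))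
  · push Not at hcase
    obtain ⟨a, ha, hnd⟩ := hcase
    obtain ⟨c, hc, hcB⟩ := Set.not_disjoint_iff.1 hnd
    refine ⟨Subtype.val '' connectedComponent a,
      isClosed_connectedComponent.isCompact.image continuous_subtype_val,
      isConnected_connectedComponent.image _ continuous_subtype_val.continuousOn,
      ⟨a, ⟨a, mem_connectedComponent, rfl⟩, ha⟩, ⟨c, ⟨c, hc, rfl⟩, hcB⟩, ?_⟩
    rintro _ ⟨z, _, rfl⟩
    exact hmem _ z.2

/-- Coordinates on `ℓ²` are continuous linear functionals. -/
lemma exists_coord (m : ℕ) : ∃ f : EllTwo →L[ℝ] ℝ, ∀ z : EllTwo, f z = z m := by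
  refine ⟨LinearMap.mkContinuous
    { toFun := fun z : EllTwo => z m
      map_add' := fun _ _ => rfl
      map_smul' := fun _ _ => rfl } 1 ?_, fun z => rfl⟩
  intro z
  rw [one_mul]
  exact lp.norm_apply_le_norm (by norm_num) z m

/-- The double cone over the Hilbert cube with vertices `x` and `y`. -/
lemma exists_cone (x y : EllTwo) (hxy : x ≠ y) :
    ∃ φ : (ℕ → unitInterval) → EllTwo, Continuous φ ∧ (∀ a, a 0 = 0 → φ a = x) ∧
      (∀ a, a 0 = 1 → φ a = y) ∧
      ∀ a b, φ a = φ b → φ a ≠ x → φ a ≠ y → ∀ i, a (i + 1) = b (i + 1) := by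
  obtain ⟨j, hj⟩ : ∃ j, x j ≠ y j := by
    by_contra h
    push Not at h
    exact hxy (lp.ext (funext h))
  let s : ℕ → (ℕ → unitInterval) → EllTwo := fun i a =>
    lp.single 2 (j + 1 + i) ((a (i + 1) : ℝ) * (1 / 2) ^ i)
  have hsn : ∀ i a, ‖s i a‖ ≤ (1 / 2 : ℝ) ^ i := by
    intro i a
    simp only [s]
    rw [lp.norm_single (by norm_num), norm_mul, Real.norm_eq_abs, abs_of_nonneg (a (i + 1)).2.1,
      norm_pow, Real.norm_of_nonneg (by norm_num : (0 : ℝ) ≤ 1 / 2)]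
    exact mul_le_of_le_one_left (by positivity) (a (i + 1)).2.2
  have hsum : Summable fun i => (1 / 2 : ℝ) ^ i := summable_geometric_two
  have hsc : ∀ i, Continuous (s i) := by
    intro i
    have : s i = fun a => ((a (i + 1) : ℝ) * (1 / 2) ^ i) • (lp.single 2 (j + 1 + i) (1 : ℝ) : EllTwo) := by
      funext a
      simp only [s]
      rw [← lp.single_smul]; simp
    rw [this]
    fun_prop
  let G : (ℕ → unitInterval) → EllTwo := fun a => ∑' i, s i a
  have hG : Continuous G := continuous_tsum hsc hsum hsn
  have hsa : ∀ a, Summable fun i => s i a := fun a => Summable.of_norm_bounded hsum (fun i => hsn i a)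
  have hGj : ∀ a, G a j = 0 := by
    intro a
    obtain ⟨f, hf⟩ := exists_coord j
    rw [← hf, f.map_tsum (hsa a)]
    simp only [hf]
    refine (tsum_congr fun i => ?_).trans tsum_zero
    exact lp.single_apply_ne _ _ _ (by omega)
  have hGi : ∀ a i, G a (j + 1 + i) = (a (i + 1) : ℝ) * (1 / 2) ^ i := by
    intro a i
    obtain ⟨f, hf⟩ := exists_coord (j + 1 + i)
    rw [← hf, f.map_tsum (hsa a)]
    simp only [hf]
    rw [tsum_eq_single i]
    · exact lp.single_apply_self _ _ _
    · intro k hk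
      exact lp.single_apply_ne _ _ _ (by omega)
  let φ : (ℕ → unitInterval) → EllTwo := fun a =>
    x + (a 0 : ℝ) • (y - x) + ((a 0 : ℝ) * (1 - a 0)) • G a
  have hφ0 : ∀ a, a 0 = 0 → φ a = x := by intro a ha; simp [φ, ha]
  have hφ1 : ∀ a, a 0 = 1 → φ a = y := by intro a ha; simp [φ, ha]
  have hcoord : ∀ a m, φ a m = x m + (a 0 : ℝ) * (y m - x m) + ((a 0 : ℝ) * (1 - a 0)) * G a m :=
    fun a m => rfl
  refine ⟨φ, by fun_prop, hφ0, hφ1, ?_⟩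
  intro a b hab hax hay i
  have t0 : (a 0 : ℝ) ≠ 0 := fun h => hax (hφ0 a (Subtype.ext h))
  have t1 : (1 - a 0 : ℝ) ≠ 0 := fun h => hay (hφ1 a (Subtype.ext (by
    rw [sub_eq_zero] at h; exact h.symm)))
  have e1 : φ a j = φ b j := by rw [hab]
  rw [hcoord, hcoord, hGj, hGj] at e1
  have hyx : y j - x j ≠ 0 := sub_ne_zero.2 (Ne.symm hj)
  have e2 : (a 0 : ℝ) = b 0 := by
    have : (a 0 : ℝ) * (y j - x j) = b 0 * (y j - x j) := by linarith
    exact mul_right_cancel₀ hyx this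
  have e3 : φ a (j + 1 + i) = φ b (j + 1 + i) := by rw [hab]
  rw [hcoord, hcoord, hGi, hGi, ← e2] at e3
  have e4 := mul_left_cancel₀ (mul_ne_zero t0 t1) (add_left_cancel e3)
  exact Subtype.ext (mul_right_cancel₀ (by positivity) e4)

end CubeAux

/-- If `x ≠ y` are points of `ℓ²` outside `S ⊆ ℓ²` and `S` intersects
every continuum in `ℓ²` containing both `x` and `y`, then `S` is strongly
infinite dimensional. -/
theorem stronglyInfiniteDimensional_of_meets_every_continuum_between_points_ellTwo
    (x y : EllTwo) (hxy : x ≠ y) (S : Set EllTwo)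
    (hx : x ∉ S) (hy : y ∉ S)
    (hS : ∀ C : Set EllTwo, IsCompact C → IsConnected C →
      x ∈ C → y ∈ C → (S ∩ C).Nonempty) :
    StronglyInfiniteDimensional S := by
  obtain ⟨φ, hφ, hφ0, hφ1, hinj⟩ := CubeAux.exists_cone x y hxy
  have cc : ∀ i : ℕ, Continuous fun a : ℕ → unitInterval => (a (i + 1) : ℝ) := fun i => by fun_prop
  let P : ℕ → Set (ℕ → unitInterval) := fun i => {a | (a (i + 1) : ℝ) ≤ 1 / 3}
  let R : ℕ → Set (ℕ → unitInterval) := fun i => {a | 2 / 3 ≤ (a (i + 1) : ℝ)}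
  have hP : ∀ i, IsClosed (P i) := fun i => isClosed_le (cc i) continuous_const
  have hR : ∀ i, IsClosed (R i) := fun i => isClosed_le continuous_const (cc i)
  refine ⟨fun i => Subtype.val ⁻¹' (φ '' P i), fun i => Subtype.val ⁻¹' (φ '' R i),
    fun i => ⟨?_, ?_, ?_⟩, ?_⟩
  · exact ((hP i).isCompact.image hφ).isClosed.preimage continuous_subtype_val
  · exact ((hR i).isCompact.image hφ).isClosed.preimage continuous_subtype_val
  · rw [Set.disjoint_left]
    rintro ⟨z, hz⟩ ⟨a, ha, haz⟩ ⟨b, hb, hbz⟩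
    simp only at haz hbz
    have := hinj a b (haz.trans hbz.symm) (fun h => hx (by rw [← h, haz]; exact hz))
      (fun h => hy (by rw [← h, haz]; exact hz)) i
    simp only [P, R, mem_ofPred_eq] at ha hb
    rw [this] at ha
    linarith
  · intro L hL
    choose hLc U V hU hV hUV hAU hBV hLUV using hL
    by_contra hemp
    rw [Set.not_nonempty_iff_eq_empty] at hemp
    -- pull back to the cube
    let T : Set (ℕ → unitInterval) := φ ⁻¹' S
    let ψ : T → S := fun a => ⟨φ a.1, a.2⟩
    have hψ : Continuous ψ := by fun_prop
    have pull : ∀ (O O' : Set S), IsOpen O' → Disjoint O O' →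
        Disjoint (closure (Subtype.val '' (ψ ⁻¹' O) : Set (ℕ → unitInterval)))
          (Subtype.val '' (ψ ⁻¹' O')) := by
      intro O O' hO' hOO
      obtain ⟨M, hM, hMe⟩ := isOpen_induced_iff.1 (hO'.preimage hψ)
      have hdis : Disjoint (Subtype.val '' (ψ ⁻¹' O) : Set (ℕ → unitInterval)) M := by
        rw [Set.disjoint_left]
        rintro _ ⟨z, hz, rfl⟩ hzM
        have : z ∈ ψ ⁻¹' O' := by rw [← hMe]; exact hzM
        exact hOO.le_bot ⟨hz, this⟩
      refine (hdis.closure_left hM).mono_right ?_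
      rintro _ ⟨z, hz, rfl⟩
      rw [← hMe] at hz; exact hz
    have away : ∀ (O : Set S) (M : Set (ℕ → unitInterval)), IsOpen M →
        (∀ z : T, z.1 ∈ M → ψ z ∉ O) →
        Disjoint (closure (Subtype.val '' (ψ ⁻¹' O) : Set (ℕ → unitInterval))) M := by
      intro O M hM h
      refine Disjoint.closure_left ?_ hM
      rw [Set.disjoint_left]
      rintro _ ⟨z, hz, rfl⟩ hzM
      exact h z hzM hz
    have sep : ∀ i, ∃ W W' : Set (ℕ → unitInterval), IsOpen W ∧ IsOpen W' ∧ Disjoint W W' ∧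
        (∀ a, a (i + 1) = 0 → a ∈ W) ∧ (∀ a, a (i + 1) = 1 → a ∈ W') ∧
        Subtype.val '' (ψ ⁻¹' U i) ⊆ W ∧ Subtype.val '' (ψ ⁻¹' V i) ⊆ W' := by
      intro i
      have k0 : IsClosed {a : ℕ → unitInterval | a (i + 1) = 0} :=
        isClosed_eq (continuous_apply _) continuous_const
      have k1 : IsClosed {a : ℕ → unitInterval | a (i + 1) = 1} :=
        isClosed_eq (continuous_apply _) continuous_const
      have k01 : Disjoint {a : ℕ → unitInterval | a (i + 1) = 0} {a | a (i + 1) = 1} := by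
        rw [Set.disjoint_left]
        intro a ha ha'
        simp only [mem_ofPred_eq] at ha ha'
        rw [ha] at ha'; exact zero_ne_one ha'
      have q1 := pull (U i) (V i) (hV i) (hUV i)
      have q2 := pull (V i) (U i) (hU i) (hUV i).symm
      have q3 : Disjoint (closure (Subtype.val '' (ψ ⁻¹' U i) : Set (ℕ → unitInterval)))
          {a | a (i + 1) = 1} := by
        refine (away (U i) {a | 2 / 3 < (a (i + 1) : ℝ)} (isOpen_lt continuous_const (cc i))
          ?_).mono_right ?_
        · intro z hz hzU
          exact (hUV i).le_bot ⟨hzU, hBV i ⟨z.1, (by simp only [R, mem_ofPred_eq] at hz ⊢; exact le_of_lt hz), rfl⟩⟩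
        · intro a ha
          simp only [mem_ofPred_eq] at ha ⊢
          rw [ha]; norm_num
      have q4 : Disjoint (closure (Subtype.val '' (ψ ⁻¹' V i) : Set (ℕ → unitInterval)))
          {a | a (i + 1) = 0} := by
        refine (away (V i) {a | (a (i + 1) : ℝ) < 1 / 3} (isOpen_lt (cc i) continuous_const)
          ?_).mono_right ?_
        · intro z hz hzV
          exact (hUV i).le_bot ⟨hAU i ⟨z.1, (by simp only [P, mem_ofPred_eq] at hz ⊢; exact le_of_lt hz), rfl⟩, hzV⟩
        · intro a ha
          simp only [mem_ofPred_eq] at ha ⊢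
          rw [ha]; norm_num
      have fin : SeparatedNhds
          (Subtype.val '' (ψ ⁻¹' U i) ∪ {a : ℕ → unitInterval | a (i + 1) = 0})
          (Subtype.val '' (ψ ⁻¹' V i) ∪ {a : ℕ → unitInterval | a (i + 1) = 1}) := by
        rw [separatedNhds_iff_disjoint]
        apply CompletelyNormalSpace.completely_normal
        · rw [closure_union, k0.closure_eq, disjoint_union_left, disjoint_union_right,
            disjoint_union_right]
          exact ⟨⟨q1, q3⟩, (q4.mono_left subset_closure).symm, k01⟩
        · rw [closure_union, k1.closure_eq, disjoint_union_left, disjoint_union_right,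
            disjoint_union_right]
          exact ⟨⟨q2.symm, q3.mono_left subset_closure⟩, q4.symm, k01⟩
      obtain ⟨W, W', hW, hW', hs, ht, hWW⟩ := fin
      exact ⟨W, W', hW, hW', hWW, fun a ha => hs (Or.inr ha), fun a ha => ht (Or.inr ha),
        fun a ha => hs (Or.inl ha), fun a ha => ht (Or.inl ha)⟩
    choose W W' hW hW' hWW hW0 hW1 hUW hVW using sep
    obtain ⟨C, hCc, hCconn, ⟨a, haC, ha⟩, ⟨c, hcC, hc⟩, hC⟩ :=
      CubeAux.exists_continuum W W' hW hW' hWW hW0 hW1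
    obtain ⟨z, hzS, ⟨d, hd, rfl⟩⟩ := hS (φ '' C) (hCc.image hφ)
      (hCconn.image _ hφ.continuousOn) ⟨a, haC, hφ0 a ha⟩ ⟨c, hcC, hφ1 c hc⟩
    have : (⟨φ d, hzS⟩ : S) ∈ ⋂ i, L i := by
      refine mem_iInter.2 fun i => ?_
      by_contra hn
      have hn' : (⟨φ d, hzS⟩ : S) ∈ U i ∪ V i := by rw [← hLUV i]; exact hn
      rcases hn' with h | h
      · exact (hC d hd i).1 (hUW i ⟨⟨d, hzS⟩, h, rfl⟩)
      · exact (hC d hd i).2 (hVW i ⟨⟨d, hzS⟩, h, rfl⟩)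
    rw [hemp] at this
    exact this
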